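/- For every f(s) = ∑_{n=1}^∞ a_n n^{-s} with ∑ |a_n|² < ∞, the limit lim_{T→∞} (1/T) ∫_0^T |f(1/2 + it)|² dt exists and equals ∑_{n=1}^∞ |a_n|² n^{-1}. -/

import Mathlib

open MeasureTheory Filter Complex Real

/-- frequencies -/
noncomputable def hlam (n : ℕ) : ℝ := Real.log ((n : ℝ) + 1)

/-- exponential polynomial -/
noncomputable def hE (d : ℕ → ℂ) (S : Finset ℕ) (t : ℝ) : ℂ :=
  ∑ n ∈ S, d n * cexp (-(I * (hlam n : ℂ) * (t : ℂ)))

lemma hE_cont (d : ℕ → ℂ) (S : Finset ℕ) : Continuous (hE d S) := by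
  unfold hE; fun_prop

lemma hE_sq (d : ℕ → ℂ) (S : Finset ℕ) (t : ℝ) :
    ((‖hE d S t‖ ^ 2 : ℝ) : ℂ) = ∑ n ∈ S, ∑ m ∈ S, d n * (starRingEnd ℂ) (d m) *
      cexp (I * ((hlam m - hlam n : ℝ) : ℂ) * t) := by
  rw [← Complex.normSq_eq_norm_sq, ← Complex.mul_conj]
  unfold hE
  rw [map_sum, Finset.sum_mul_sum]
  refine Finset.sum_congr rfl fun n _ => Finset.sum_congr rfl fun m _ => ?_
  rw [map_mul, ← Complex.exp_conj]
  simp only [map_neg, map_mul, Complex.conj_I, Complex.conj_ofReal]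
  rw [mul_mul_mul_comm, ← Complex.exp_add]
  congr 2
  push_cast; ring

lemma hk_row (n M : ℕ) : ∑ m ∈ Finset.range M,
    rexp (-(hlam n + hlam m) / 2 - 3 / 2 * |hlam n - hlam m|) ≤ 2 := by
  have hn : (0 : ℝ) < (n : ℝ) + 1 := by positivity
  have e1 : ∀ m : ℕ, rexp (hlam m) = (m : ℝ) + 1 := fun m => Real.exp_log (by positivity)
  have key1 : ∀ m ≤ n, rexp (-(hlam n + hlam m) / 2 - 3 / 2 * |hlam n - hlam m|)
      ≤ 1 / ((n : ℝ) + 1) := by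
    intro m hm
    have : hlam m ≤ hlam n := Real.log_le_log (by positivity) (by gcongr)
    rw [abs_of_nonneg (by linarith), ← e1, one_div, ← Real.exp_neg]
    apply Real.exp_le_exp.2; linarith
  have key2 : ∀ m, n ≤ m → rexp (-(hlam n + hlam m) / 2 - 3 / 2 * |hlam n - hlam m|)
      = ((n : ℝ) + 1) / ((m : ℝ) + 1) ^ 2 := by
    intro m hm
    have : hlam n ≤ hlam m := Real.log_le_log (by positivity) (by gcongr)
    rw [abs_of_nonpos (by linarith), ← e1, ← e1, ← Real.exp_nat_mul, ← Real.exp_sub]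
    congr 1; push_cast; ring
  have A : ∀ M ≤ n + 1, ∑ m ∈ Finset.range M,
      rexp (-(hlam n + hlam m) / 2 - 3 / 2 * |hlam n - hlam m|) ≤ M / ((n : ℝ) + 1) := by
    intro M hM
    calc _ ≤ ∑ m ∈ Finset.range M, 1 / ((n : ℝ) + 1) :=
          Finset.sum_le_sum fun m hm => key1 m (by have := Finset.mem_range.1 hm; omega)
      _ = _ := by simp [div_eq_mul_inv]
  have B : ∀ M, n + 1 ≤ M → ∑ m ∈ Finset.range M,
      rexp (-(hlam n + hlam m) / 2 - 3 / 2 * |hlam n - hlam m|) ≤ 2 - ((n : ℝ) + 1) / M := by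
    intro M hM
    induction M, hM using Nat.le_induction with
    | base =>
      refine (A _ le_rfl).trans ?_
      push_cast; rw [div_self hn.ne']; norm_num
    | succ m hm ih =>
      rw [Finset.sum_range_succ, key2 m (by omega)]
      have hm0 : (0 : ℝ) < m := by exact_mod_cast (by omega : 0 < m)
      have : ((n : ℝ) + 1) / ((m : ℝ) + 1) ^ 2 ≤ ((n : ℝ) + 1) / m - ((n : ℝ) + 1) / ((m + 1 : ℕ) : ℝ) := by
        push_cast
        rw [div_sub_div _ _ (by positivity) (by positivity), div_le_div_iff₀ (by positivity) (by positivity)]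
        nlinarith [mul_pos hn hm0, mul_pos hn (mul_pos hm0 hm0)]
      linarith
  rcases le_total M (n + 1) with h | h
  · refine (A M h).trans ?_
    rw [div_le_iff₀ hn]
    have : (M : ℝ) ≤ n + 1 := by exact_mod_cast h
    linarith
  · refine (B M h).trans ?_
    have : 0 ≤ ((n : ℝ) + 1) / M := by positivity
    linarith

lemma hschur (x : ℕ → ℝ) (M : ℕ) : ∑ n ∈ Finset.range M, ∑ m ∈ Finset.range M,
    x n * x m * rexp (-(hlam n + hlam m) / 2 - 3 / 2 * |hlam n - hlam m|) ≤
      2 * ∑ n ∈ Finset.range M, x n ^ 2 := by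
  set k : ℕ → ℕ → ℝ := fun n m => rexp (-(hlam n + hlam m) / 2 - 3 / 2 * |hlam n - hlam m|) with hk
  have hsym : ∀ n m, k n m = k m n := fun n m => by simp only [hk, abs_sub_comm, add_comm]
  have hD : ∑ n ∈ Finset.range M, ∑ m ∈ Finset.range M, x n ^ 2 * k n m ≤
      2 * ∑ n ∈ Finset.range M, x n ^ 2 := by
    rw [Finset.mul_sum]
    refine Finset.sum_le_sum fun n _ => ?_
    rw [← Finset.mul_sum, mul_comm]
    exact mul_le_mul_of_nonneg_right (hk_row n M) (sq_nonneg _)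
  have hD2 : ∑ n ∈ Finset.range M, ∑ m ∈ Finset.range M, x m ^ 2 * k n m =
    ∑ n ∈ Finset.range M, ∑ m ∈ Finset.range M, x n ^ 2 * k n m := by
    rw [Finset.sum_comm]
    simp_rw [hsym]
  have : ∑ n ∈ Finset.range M, ∑ m ∈ Finset.range M, x n * x m * k n m ≤
     ∑ n ∈ Finset.range M, ∑ m ∈ Finset.range M, (x n ^ 2 * k n m + x m ^ 2 * k n m) / 2 := by
    refine Finset.sum_le_sum fun n _ => Finset.sum_le_sum fun m _ => ?_
    have : 0 ≤ k n m := (Real.exp_pos _).le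
    nlinarith [mul_nonneg (sq_nonneg (x n - x m)) this]
  refine this.trans ?_
  simp_rw [← Finset.sum_div, Finset.sum_add_distrib]
  rw [hD2]
  linarith

/-- the constant -/
noncomputable def hC : ℝ := rexp 1 * (√π * (rexp (9 / 4) * 2))

lemma hC_pos : 0 < hC := by unfold hC; positivity

lemma hgauss (T : ℝ) (hT : 1 ≤ T) (ξ : ℝ) :
    Integrable (fun t : ℝ => cexp (I * ξ * t) * cexp (-((T⁻¹ ^ 2 : ℝ) : ℂ) * t ^ 2)) ∧
    ‖∫ t : ℝ, cexp (I * ξ * t) * cexp (-((T⁻¹ ^ 2 : ℝ) : ℂ) * t ^ 2)‖ ≤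
      T * √π * rexp (9 / 4) * rexp (-(3 / 2 * |ξ|)) := by
  have hT0 : 0 < T := by linarith
  have hb : 0 < T⁻¹ ^ 2 := by positivity
  constructor
  · have h2 := integrable_cexp_quadratic (b := ((T⁻¹ ^ 2 : ℝ) : ℂ)) (by rwa [Complex.ofReal_re]) (I * ξ) 0
    refine h2.congr (Eventually.of_forall fun t => ?_)
    simp only
    rw [← Complex.exp_add]; congr 1; ring
  · rw [fourierIntegral_gaussian (by rwa [Complex.ofReal_re]), norm_mul]
    have h1 : ‖((π : ℂ) / ((T⁻¹ ^ 2 : ℝ) : ℂ)) ^ (1 / 2 : ℂ)‖ = T * √π := by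
      rw [← Complex.ofReal_div, Complex.norm_cpow_eq_rpow_re_of_pos (by positivity)]
      have : (1 / 2 : ℂ).re = 1 / 2 := by norm_num
      rw [this, ← Real.sqrt_eq_rpow]
      rw [show π / T⁻¹ ^ 2 = T ^ 2 * π by field_simp, Real.sqrt_mul (by positivity), Real.sqrt_sq hT0.le]
    rw [h1, mul_assoc _ (rexp (9 / 4)), ← Real.exp_add]
    refine mul_le_mul_of_nonneg_left ?_ (by positivity)
    have h2 : -(ξ : ℂ) ^ 2 / (4 * ((T⁻¹ ^ 2 : ℝ) : ℂ)) = ((-(ξ ^ 2 * T ^ 2 / 4) : ℝ) : ℂ) := by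
      have : (T : ℂ) ≠ 0 := by exact_mod_cast hT0.ne'
      push_cast; field_simp
    rw [h2, Complex.norm_exp, Complex.ofReal_re, Real.exp_le_exp]
    have h3 : ξ ^ 2 ≤ ξ ^ 2 * T ^ 2 := by nlinarith [sq_nonneg ξ, mul_nonneg (sq_nonneg ξ) (by nlinarith : (0:ℝ) ≤ T ^ 2 - 1)]
    nlinarith [sq_nonneg (|ξ| / 2 - 3 / 2), sq_abs ξ]

lemma hlarge (c : ℕ → ℂ) (M : ℕ) (T : ℝ) (hT : 1 ≤ T) :
    ∫ t in (0 : ℝ)..T, ‖hE (fun n => c n * (rexp (-hlam n / 2) : ℝ)) (Finset.range M) t‖ ^ 2 ≤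
      hC * T * ∑ n ∈ Finset.range M, ‖c n‖ ^ 2 := by
  have hT0 : 0 < T := by linarith
  set d : ℕ → ℂ := fun n => c n * (rexp (-hlam n / 2) : ℝ) with hd
  set S := Finset.range M
  have hdn : ∀ n, ‖d n‖ = ‖c n‖ * rexp (-hlam n / 2) := fun n => by
    rw [hd]; simp only [norm_mul, Complex.norm_real, Real.norm_eq_abs, Real.abs_exp]
  set w : ℝ → ℝ := fun t => rexp (-(T⁻¹ ^ 2) * t ^ 2) with hw
  have hwc : ∀ t : ℝ, ((w t : ℝ) : ℂ) = cexp (-((T⁻¹ ^ 2 : ℝ) : ℂ) * t ^ 2) := fun t => by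
    rw [hw]; push_cast; rfl
  have hid : ∀ t : ℝ, ((‖hE d S t‖ ^ 2 * w t : ℝ) : ℂ) = ∑ n ∈ S, ∑ m ∈ S,
      d n * (starRingEnd ℂ) (d m) * (cexp (I * ((hlam m - hlam n : ℝ) : ℂ) * t) *
        cexp (-((T⁻¹ ^ 2 : ℝ) : ℂ) * t ^ 2)) := by
    intro t
    rw [Complex.ofReal_mul, hE_sq, hwc, Finset.sum_mul]
    refine Finset.sum_congr rfl fun n _ => ?_
    rw [Finset.sum_mul]
    exact Finset.sum_congr rfl fun m _ => by ring
  have hintc : Integrable (fun t : ℝ => ((‖hE d S t‖ ^ 2 * w t : ℝ) : ℂ)) := by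
    simp_rw [hid]
    exact integrable_finsetSum _ fun n _ => integrable_finsetSum _ fun m _ =>
      (hgauss T hT _).1.const_mul _
  have hint : Integrable (fun t : ℝ => ‖hE d S t‖ ^ 2 * w t) := by
    have := hintc.re
    simpa only [RCLike.re_to_complex, Complex.ofReal_re] using this
  have hbound : ∫ t, ‖hE d S t‖ ^ 2 * w t ≤ T * √π * rexp (9 / 4) * (2 * ∑ n ∈ S, ‖c n‖ ^ 2) := by
    have h1 : ∫ t, ‖hE d S t‖ ^ 2 * w t ≤ ‖∫ t, ((‖hE d S t‖ ^ 2 * w t : ℝ) : ℂ)‖ := by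
      rw [integral_complex_ofReal, Complex.norm_real]
      exact le_abs_self _
    refine h1.trans ?_
    simp_rw [hid]
    rw [integral_finsetSum _ fun n _ => integrable_finsetSum _ fun m _ =>
      (hgauss T hT _).1.const_mul _]
    simp_rw [fun n => integral_finsetSum (μ := (volume : Measure ℝ)) S (f := fun m (t : ℝ) => d n * (starRingEnd ℂ) (d m) * (cexp (I * ((hlam m - hlam n : ℝ) : ℂ) * t) *
        cexp (-((T⁻¹ ^ 2 : ℝ) : ℂ) * t ^ 2))) fun m _ =>
      (hgauss T hT _).1.const_mul _]
    refine le_trans ?_ (mul_le_mul_of_nonneg_left (hschur (fun n => ‖c n‖) M) (by positivity))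
    rw [Finset.mul_sum]
    refine (norm_sum_le _ _).trans (Finset.sum_le_sum fun n _ => ?_)
    rw [Finset.mul_sum]
    refine (norm_sum_le _ _).trans (Finset.sum_le_sum fun m _ => ?_)
    rw [integral_const_mul, norm_mul, norm_mul, RCLike.norm_conj, hdn, hdn]
    refine (mul_le_mul_of_nonneg_left (hgauss T hT _).2 (by positivity)).trans (le_of_eq ?_)
    rw [abs_sub_comm, show -(hlam n + hlam m) / 2 - 3 / 2 * |hlam n - hlam m| = -hlam n / 2 + (-hlam m / 2) + (-(3 / 2 * |hlam n - hlam m|)) by ring,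
      Real.exp_add, Real.exp_add]
    ring
  have hcont := hE_cont d S
  have step : ∫ t in (0 : ℝ)..T, ‖hE d S t‖ ^ 2 ≤ ∫ t, rexp 1 * (‖hE d S t‖ ^ 2 * w t) := by
    rw [intervalIntegral.integral_of_le hT0.le]
    refine le_trans ?_ (setIntegral_le_integral (s := Set.Ioc 0 T) (hint.const_mul _) (Eventually.of_forall fun t => by
      simp only [hw, Pi.zero_apply]; positivity))
    refine setIntegral_mono_on ?_ (hint.const_mul _).integrableOn measurableSet_Ioc fun t ht => ?_
    · exact ((hcont.norm.pow 2).intervalIntegrable 0 T).1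
    · have : 1 ≤ rexp 1 * w t := by
        rw [hw, ← Real.exp_add]
        apply Real.one_le_exp
        have : (T⁻¹ * t) ^ 2 ≤ 1 := by
          rw [← div_eq_inv_mul]
          exact pow_le_one₀ (div_nonneg ht.1.le hT0.le) ((div_le_one hT0).2 ht.2)
        nlinarith
      nlinarith [sq_nonneg ‖hE d S t‖]
  refine step.trans ?_
  rw [integral_const_mul]
  refine (mul_le_mul_of_nonneg_left hbound (by positivity)).trans (le_of_eq ?_)
  unfold hC; ring

lemma hmean (d : ℕ → ℂ) (M : ℕ) :
    Tendsto (fun T : ℝ => (1 / T) * ∫ t in (0:ℝ)..T, ‖hE d (Finset.range M) t‖ ^ 2) atTop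
      (nhds (∑ n ∈ Finset.range M, ‖d n‖ ^ 2)) := by
  have hexp : ∀ ξ : ℝ, Tendsto (fun T : ℝ => ((1 / T : ℝ) : ℂ) * ∫ t in (0:ℝ)..T, cexp (I * ξ * t)) atTop
      (nhds (if ξ = 0 then 1 else 0)) := by
    intro ξ
    split_ifs with h
    · subst h
      refine tendsto_const_nhds.congr' ?_
      filter_upwards [eventually_gt_atTop 0] with T hT
      have : (T : ℂ) ≠ 0 := by exact_mod_cast hT.ne'
      simp [this]
    · have hne : I * (ξ : ℂ) ≠ 0 := mul_ne_zero I_ne_zero (by exact_mod_cast h)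
      have hz : Tendsto (fun T : ℝ => (1 / T) * (2 / |ξ|)) atTop (nhds 0) := by
        have := (tendsto_inv_atTop_zero (𝕜 := ℝ)).mul_const (2 / |ξ|)
        simpa [one_div] using this
      refine squeeze_zero_norm' ?_ hz
      filter_upwards [eventually_gt_atTop 0] with T hT
      rw [integral_exp_mul_complex hne, norm_mul, Complex.norm_real, Real.norm_of_nonneg (by positivity), norm_div]
      gcongr
      · refine (norm_sub_le _ _).trans ?_
        have : ∀ x : ℝ, ‖cexp (I * ξ * x)‖ = 1 := fun x => by
          rw [show I * (ξ:ℂ) * x = ((ξ * x : ℝ) : ℂ) * I by push_cast; ring, Complex.norm_exp_ofReal_mul_I]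
        rw [this, this]; norm_num
      · simp
  have hinj : ∀ n m : ℕ, hlam m - hlam n = 0 ↔ n = m := by
    intro n m
    constructor
    · intro h
      have h1 : rexp (hlam m) = rexp (hlam n) := by rw [sub_eq_zero.1 h]
      simp only [hlam] at h1
      rw [Real.exp_log (by positivity), Real.exp_log (by positivity)] at h1
      have : (m : ℝ) = n := by linarith
      exact_mod_cast this.symm
    · rintro rfl; simp
  have hc : Tendsto (fun T : ℝ => (((1 / T) * ∫ t in (0:ℝ)..T, ‖hE d (Finset.range M) t‖ ^ 2 : ℝ) : ℂ)) atTop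
      (nhds ((∑ n ∈ Finset.range M, ‖d n‖ ^ 2 : ℝ) : ℂ)) := by
    have e1 : ∀ T : ℝ, (((1 / T) * ∫ t in (0:ℝ)..T, ‖hE d (Finset.range M) t‖ ^ 2 : ℝ) : ℂ) =
       ∑ n ∈ Finset.range M, ∑ m ∈ Finset.range M, d n * (starRingEnd ℂ) (d m) *
        (((1 / T : ℝ) : ℂ) * ∫ t in (0:ℝ)..T, cexp (I * ((hlam m - hlam n : ℝ) : ℂ) * t)) := by
      intro T
      rw [Complex.ofReal_mul, ← intervalIntegral.integral_ofReal]
      simp_rw [hE_sq]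
      rw [intervalIntegral.integral_finsetSum (fun n _ => Continuous.intervalIntegrable (by fun_prop) _ _), Finset.mul_sum]
      refine Finset.sum_congr rfl fun n _ => ?_
      rw [intervalIntegral.integral_finsetSum (fun n _ => Continuous.intervalIntegrable (by fun_prop) _ _), Finset.mul_sum]
      refine Finset.sum_congr rfl fun m _ => ?_
      rw [intervalIntegral.integral_const_mul]; ring
    simp_rw [e1]
    have e2 : ((∑ n ∈ Finset.range M, ‖d n‖ ^ 2 : ℝ) : ℂ) = ∑ n ∈ Finset.range M, ∑ m ∈ Finset.range M,
       d n * (starRingEnd ℂ) (d m) * (if hlam m - hlam n = 0 then 1 else 0) := by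
      rw [Complex.ofReal_sum]
      refine Finset.sum_congr rfl fun n hn => ?_
      simp only [hinj, mul_ite, mul_one, mul_zero, Finset.sum_ite_eq, hn, if_true]
      rw [Complex.mul_conj, Complex.normSq_eq_norm_sq]
    rw [e2]
    exact tendsto_finsetSum _ fun n _ => tendsto_finsetSum _ fun m _ => (hexp _).const_mul _
  have := (Complex.continuous_re.tendsto _).comp hc
  simpa only [Function.comp_def, Complex.ofReal_re] using this

lemma hfatou {μ : Measure ℝ} (u : ℕ → ℝ → ℂ) (v : ℝ → ℂ) (B : ENNReal)
    (hu : ∀ k, AEMeasurable (u k) μ) (hB : ∀ k, ∫⁻ t, ‖u k t‖ₑ ^ 2 ∂μ ≤ B)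
    (hl : ∀ᵐ t ∂μ, Tendsto (fun k => u k t) atTop (nhds (v t))) :
    ∫⁻ t, ‖v t‖ₑ ^ 2 ∂μ ≤ B := by
  have e : ∫⁻ t, ‖v t‖ₑ ^ 2 ∂μ = ∫⁻ t, liminf (fun k => ‖u k t‖ₑ ^ 2) atTop ∂μ := by
    refine lintegral_congr_ae ?_
    filter_upwards [hl] with t ht
    have : Tendsto (fun k => ‖u k t‖ₑ ^ 2) atTop (nhds (‖v t‖ₑ ^ 2)) :=
      ((ENNReal.continuous_pow 2).tendsto _).comp ht.enorm
    exact this.liminf_eq.symm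
  rw [e]
  refine (lintegral_liminf_le' fun k => (hu k).enorm.pow_const 2).trans ?_
  refine (liminf_le_liminf (Eventually.of_forall hB)).trans ?_
  rw [liminf_const]

lemma hlam_nonneg (n : ℕ) : 0 ≤ hlam n :=
  Real.log_nonneg (by linarith [(Nat.cast_nonneg n : (0:ℝ) ≤ n)])

lemma hfatou2 (c : ℕ → ℂ) (ε : ℕ → ℝ) (hε : ∀ k, 0 < ε k) (r : ℝ)
    (hr : ∀ M, ∑ n ∈ Finset.range M, ‖c n‖ ^ 2 ≤ r)
    (G : ℕ → ℝ → ℂ) (g : ℝ → ℂ)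
    (hG : ∀ k t, Tendsto (fun M => hE (fun n => c n * (rexp (-hlam n * ε k) : ℝ) * (rexp (-hlam n / 2) : ℝ))
      (Finset.range M) t) atTop (nhds (G k t)))
    (hg : ∀ᵐ t : ℝ, Tendsto (fun k => G k t) atTop (nhds (g t))) (T : ℝ) (hT : 1 ≤ T) :
    AEStronglyMeasurable g ∧
    ∫⁻ t in Set.Ioc 0 T, ‖g t‖ₑ ^ 2 ≤ ENNReal.ofReal (hC * T * r) := by
  have hGm : ∀ k, Measurable (G k) := fun k =>
    measurable_of_tendsto_metrizable (fun M => (hE_cont _ (Finset.range M)).measurable)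
      (tendsto_pi_nhds.2 (hG k))
  refine ⟨(aemeasurable_of_tendsto_metrizable_ae _ (fun k => (hGm k).aemeasurable) hg).aestronglyMeasurable, ?_⟩
  refine hfatou G g _ (fun k => (hGm k).aemeasurable) (fun k => ?_) (ae_restrict_of_ae hg)
  refine hfatou _ (G k) _ (fun M => (hE_cont _ (Finset.range M)).aemeasurable) (fun M => ?_)
    (Eventually.of_forall (hG k))
  have hcont := hE_cont (fun n => c n * (rexp (-hlam n * ε k) : ℝ) * (rexp (-hlam n / 2) : ℝ)) (Finset.range M)
  have h1 := hlarge (fun n => c n * (rexp (-hlam n * ε k) : ℝ)) M T hT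
  rw [intervalIntegral.integral_of_le (by linarith)] at h1
  have h2 : ∑ n ∈ Finset.range M, ‖c n * (rexp (-hlam n * ε k) : ℝ)‖ ^ 2 ≤ r := by
    refine (Finset.sum_le_sum fun n _ => ?_).trans (hr M)
    rw [norm_mul, Complex.norm_real, Real.norm_eq_abs, Real.abs_exp]
    gcongr
    refine mul_le_of_le_one_right (norm_nonneg _) (Real.exp_le_one_iff.2 ?_)
    nlinarith [mul_nonneg (hlam_nonneg n) (hε k).le]
  have h3 := h1.trans (mul_le_mul_of_nonneg_left h2 (mul_nonneg hC_pos.le (by linarith)))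
  refine le_trans (le_of_eq ?_) (ENNReal.ofReal_le_ofReal h3)
  rw [ofReal_integral_eq_lintegral_ofReal]
  · refine lintegral_congr fun t => ?_
    rw [ENNReal.ofReal_pow (norm_nonneg _), ofReal_norm]
  · exact ((hcont.norm.pow 2).intervalIntegrable 0 T).1
  · exact Eventually.of_forall fun t => by simp only [Pi.zero_apply]; positivity

lemma hcompare (u v : ℝ → ℂ) (hv : Continuous v) (T : ℝ) (hT : 1 ≤ T) (B : ℝ) (hB0 : 0 ≤ B)
    (hm : AEStronglyMeasurable (fun t => u t - v t))
    (hB : ∫⁻ t in Set.Ioc 0 T, ‖u t - v t‖ₑ ^ 2 ≤ ENNReal.ofReal B) (δ : ℝ) (hδ : 0 < δ) :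
    |(∫ t in (0:ℝ)..T, ‖u t‖ ^ 2) - ∫ t in (0:ℝ)..T, ‖v t‖ ^ 2| ≤
      δ * (∫ t in (0:ℝ)..T, ‖v t‖ ^ 2) + (1 + 1 / δ) * B := by
  have hT0 : (0:ℝ) ≤ T := by linarith
  simp only [intervalIntegral.integral_of_le hT0]
  set μ := (volume : Measure ℝ).restrict (Set.Ioc 0 T) with hμ
  have hm' : AEStronglyMeasurable (fun t => u t - v t) μ := hm.restrict
  have hum : AEStronglyMeasurable u μ := by
    have := hm'.add hv.aestronglyMeasurable
    refine this.congr (Eventually.of_forall fun t => by simp)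
  have hvi : Integrable (fun t => ‖v t‖ ^ 2) μ := ((hv.norm.pow 2).intervalIntegrable 0 T).1
  have heq : ∀ t, ENNReal.ofReal (‖u t - v t‖ ^ 2) = ‖u t - v t‖ₑ ^ 2 := fun t => by
    rw [ENNReal.ofReal_pow (norm_nonneg _), ofReal_norm]
  have hwi : Integrable (fun t => ‖u t - v t‖ ^ 2) μ := by
    refine ⟨hm'.norm.pow 2, ?_⟩
    rw [hasFiniteIntegral_iff_ofReal (Eventually.of_forall fun t => by simp only [Pi.zero_apply]; positivity)]
    simp_rw [heq]
    exact hB.trans_lt ENNReal.ofReal_lt_top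
  have hwB : ∫ t, ‖u t - v t‖ ^ 2 ∂μ ≤ B := by
    rw [← ENNReal.ofReal_le_ofReal_iff hB0, ofReal_integral_eq_lintegral_ofReal hwi
      (Eventually.of_forall fun t => by simp only [Pi.zero_apply]; positivity)]
    simp_rw [heq]
    exact hB
  have hpt : ∀ t, |‖u t‖ ^ 2 - ‖v t‖ ^ 2| ≤ δ * ‖v t‖ ^ 2 + (1 + 1 / δ) * ‖u t - v t‖ ^ 2 := by
    intro t
    have h1 : |‖u t‖ - ‖v t‖| ≤ ‖u t - v t‖ := abs_norm_sub_norm_le _ _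
    have h2 : ‖u t‖ ≤ ‖v t‖ + ‖u t - v t‖ := by
      have := (abs_le.1 h1).2; linarith
    have hx := norm_nonneg (u t)
    have hy := norm_nonneg (v t)
    have hz := norm_nonneg (u t - v t)
    generalize ‖u t‖ = x at *
    generalize ‖v t‖ = y at *
    generalize ‖u t - v t‖ = z at *
    have h3 : |x ^ 2 - y ^ 2| = |x - y| * (x + y) := by
      rw [show x ^ 2 - y ^ 2 = (x - y) * (x + y) by ring, abs_mul, abs_of_nonneg (by linarith : 0 ≤ x + y)]
    have h4 : |x - y| * (x + y) ≤ z * (2 * y + z) :=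
      mul_le_mul h1 (by linarith) (by linarith) hz
    have h5 : 2 * (y * z) ≤ δ * y ^ 2 + 1 / δ * z ^ 2 := by
      have : 0 ≤ (δ * y - z) ^ 2 / δ := by positivity
      have h6 : (δ * y - z) ^ 2 / δ = δ * y ^ 2 + 1 / δ * z ^ 2 - 2 * (y * z) := by
        field_simp; ring
      linarith
    rw [h3]; nlinarith
  have hdom : Integrable (fun t => δ * ‖v t‖ ^ 2 + (1 + 1 / δ) * ‖u t - v t‖ ^ 2) μ :=
    (hvi.const_mul _).add (hwi.const_mul _)
  have hdi : Integrable (fun t => ‖u t‖ ^ 2 - ‖v t‖ ^ 2) μ :=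
    hdom.mono' ((hum.norm.pow 2).sub hvi.1) (Eventually.of_forall fun t => hpt t)
  have hui : Integrable (fun t => ‖u t‖ ^ 2) μ :=
    (hdi.add hvi).congr (Eventually.of_forall fun t => by simp)
  rw [← integral_sub hui hvi]
  refine (abs_integral_le_integral_abs).trans ?_
  refine (integral_mono hdi.abs hdom hpt).trans ?_
  rw [integral_add (hvi.const_mul _) (hwi.const_mul _), integral_const_mul, integral_const_mul]
  gcongr

/-- For every `f ∈ 𝓗²` (a Dirichlet series with square-summable coefficients), with
a.e. boundary values `fb` on the critical line `Re s = 1/2`, the means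
`(1/T) ∫_0^T |f(1/2+it)|² dt` converge to `∑ |aₙ|² n^{-1}`. -/
theorem H2_mean_square_on_critical_line (a : ℕ → ℂ) (f : ℂ → ℂ) (fb : ℝ → ℂ)
    (ha : Summable (fun n : ℕ => ‖a (n + 1)‖ ^ 2))
    (hrep : ∀ s : ℂ, (1 / 2 : ℝ) < s.re →
      HasSum (fun n : ℕ => a (n + 1) * ((n + 1 : ℕ) : ℂ) ^ (-s)) (f s))
    (hfb : ∀ᵐ t : ℝ ∂volume,
      Tendsto (fun σ : ℝ => f (σ + t * I)) (nhdsWithin (1 / 2) (Set.Ioi (1 / 2)))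
        (nhds (fb t))) :
    Tendsto (fun T : ℝ => (1 / T) * ∫ t in (0:ℝ)..T, ‖fb t‖ ^ 2)
      atTop (nhds (∑' n : ℕ, ‖a (n + 1)‖ ^ 2 * ((n + 1 : ℕ) : ℝ)⁻¹)) := by
  have hI : ∀ n : ℕ, rexp (-hlam n) = ((n + 1 : ℕ) : ℝ)⁻¹ := fun n => by
    rw [Real.exp_neg, hlam, Real.exp_log (by positivity)]; push_cast; rfl
  set A : ℕ → ℂ := fun n => a (n + 1) with hA
  set ε : ℕ → ℝ := fun k => 1 / ((k : ℝ) + 1) with hε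
  have hε0 : ∀ k, 0 < ε k := fun k => by simp only [hε]; positivity
  have hεt : Tendsto ε atTop (nhds 0) := tendsto_one_div_add_atTop_nhds_zero_nat
  have hterm : ∀ k n (t : ℝ), a (n + 1) * ((n + 1 : ℕ) : ℂ) ^ (-(((1 / 2 + ε k : ℝ) : ℂ) + t * I)) =
      A n * (rexp (-hlam n * ε k) : ℝ) * (rexp (-hlam n / 2) : ℝ) * cexp (-(I * (hlam n : ℂ) * (t : ℂ))) := by
    intro k n t
    rw [Complex.cpow_def_of_ne_zero (by exact_mod_cast Nat.succ_ne_zero n), ← Complex.natCast_log]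
    rw [hA, Complex.ofReal_exp, Complex.ofReal_exp]
    simp only
    rw [mul_assoc, mul_assoc, ← Complex.exp_add, ← Complex.exp_add]
    congr 2
    simp only [hlam]
    push_cast; ring
  have hG : ∀ k (t : ℝ), Tendsto (fun M => hE (fun n => A n * (rexp (-hlam n * ε k) : ℝ) * (rexp (-hlam n / 2) : ℝ))
      (Finset.range M) t) atTop (nhds (f (((1 / 2 + ε k : ℝ) : ℂ) + t * I))) := by
    intro k t
    have := (hrep (((1 / 2 + ε k : ℝ) : ℂ) + t * I) (by simp [hε0])).tendsto_sum_nat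
    simp_rw [hterm] at this
    exact this
  have hGb : ∀ᵐ t : ℝ, Tendsto (fun k => f (((1 / 2 + ε k : ℝ) : ℂ) + t * I)) atTop (nhds (fb t)) := by
    filter_upwards [hfb] with t ht
    refine ht.comp (tendsto_nhdsWithin_iff.2 ⟨?_, Eventually.of_forall fun k => ?_⟩)
    · have h0 := hεt.const_add (1 / 2 : ℝ)
      rwa [add_zero] at h0
    · simp [hε0]
  set D : ℕ → ℂ := fun n => A n * (rexp (-hlam n / 2) : ℝ) with hD
  have hDn : ∀ n, ‖D n‖ ^ 2 = ‖a (n + 1)‖ ^ 2 * ((n + 1 : ℕ) : ℝ)⁻¹ := by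
    intro n
    rw [← hI, hD]
    simp only [norm_mul, Complex.norm_real, Real.norm_eq_abs, Real.abs_exp, mul_pow, ← Real.exp_nat_mul]
    congr 2; push_cast; ring
  -- the tail estimate
  have htail : ∀ N (r : ℝ), (∀ M, ∑ n ∈ Finset.range M, ‖if n < N then 0 else A n‖ ^ 2 ≤ r) → ∀ T : ℝ, 1 ≤ T →
      AEStronglyMeasurable (fun t => fb t - hE D (Finset.range N) t) ∧
      ∫⁻ t in Set.Ioc 0 T, ‖fb t - hE D (Finset.range N) t‖ₑ ^ 2 ≤ ENNReal.ofReal (hC * T * r) := by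
    intro N r hr T hT
    refine hfatou2 (fun n => if n < N then 0 else A n) ε hε0 r hr
      (fun k t => f (((1 / 2 + ε k : ℝ) : ℂ) + t * I) -
        hE (fun n => A n * (rexp (-hlam n * ε k) : ℝ) * (rexp (-hlam n / 2) : ℝ)) (Finset.range N) t) _ ?_ ?_ T hT
    · intro k t
      refine ((hG k t).sub_const _).congr' ?_
      filter_upwards [eventually_ge_atTop N] with M hM
      unfold hE
      rw [← Finset.sum_range_add_sum_Ico _ hM, ← Finset.sum_range_add_sum_Ico _ hM, add_sub_cancel_left]
      have z : ∑ n ∈ Finset.range N, (if n < N then 0 else A n) * (rexp (-hlam n * ε k) : ℝ) *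
          (rexp (-hlam n / 2) : ℝ) * cexp (-(I * (hlam n : ℂ) * (t : ℂ))) = 0 :=
        Finset.sum_eq_zero fun n hn => by simp [Finset.mem_range.1 hn]
      rw [z, zero_add]
      refine Finset.sum_congr rfl fun n hn => ?_
      simp only [if_neg (not_lt.2 (Finset.mem_Ico.1 hn).1)]
    · filter_upwards [hGb] with t ht
      refine ht.sub ?_
      refine tendsto_finsetSum _ fun n _ => ?_
      refine Tendsto.mul_const _ ?_
      refine Tendsto.mul_const _ ?_
      have : Tendsto (fun k => A n * ((rexp (-hlam n * ε k) : ℝ) : ℂ)) atTop (nhds (A n * ((rexp (-hlam n * 0) : ℝ) : ℂ))) := by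
        refine Tendsto.const_mul _ ?_
        exact ((Complex.continuous_ofReal.comp Real.continuous_exp).tendsto _).comp (hεt.const_mul _)
      simpa using this
  -- summability
  have hsum : Summable (fun n : ℕ => ‖a (n + 1)‖ ^ 2 * ((n + 1 : ℕ) : ℝ)⁻¹) := by
    refine ha.of_nonneg_of_le (fun n => by positivity) fun n => ?_
    refine mul_le_of_le_one_right (by positivity) (inv_le_one_of_one_le₀ (by push_cast; linarith [(Nat.cast_nonneg n : (0:ℝ) ≤ n)]))
  set L := ∑' n : ℕ, ‖a (n + 1)‖ ^ 2 * ((n + 1 : ℕ) : ℝ)⁻¹ with hL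
  have hLt : Tendsto (fun N => ∑ n ∈ Finset.range N, ‖D n‖ ^ 2) atTop (nhds L) := by
    simp_rw [hDn]; exact hsum.hasSum.tendsto_sum_nat
  have hL0 : 0 ≤ L := tsum_nonneg fun n => by positivity
  set R : ℕ → ℝ := fun N => (∑' n : ℕ, ‖A n‖ ^ 2) - ∑ n ∈ Finset.range N, ‖A n‖ ^ 2 with hR
  have hRt : Tendsto R atTop (nhds 0) := by
    have := (ha.hasSum.tendsto_sum_nat).const_sub (∑' n : ℕ, ‖A n‖ ^ 2)
    rwa [show (∑' n : ℕ, ‖A n‖ ^ 2) - ∑' n : ℕ, ‖a (n + 1)‖ ^ 2 = 0 from sub_self _] at this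
  have hRb : ∀ N M, ∑ n ∈ Finset.range M, ‖if n < N then 0 else A n‖ ^ 2 ≤ R N := by
    intro N M
    have h1 : ∑ n ∈ Finset.range M, ‖if n < N then 0 else A n‖ ^ 2 ≤
        ∑ n ∈ Finset.range (N + M), ‖if n < N then 0 else A n‖ ^ 2 :=
      Finset.sum_le_sum_of_subset_of_nonneg (Finset.range_mono (by omega)) fun _ _ _ => by positivity
    have h2 : ∑ n ∈ Finset.range (N + M), ‖A n‖ ^ 2 ≤ ∑' n : ℕ, ‖A n‖ ^ 2 :=
      ha.sum_le_tsum _ fun _ _ => by positivity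
    have h3 : ∑ n ∈ Finset.range (N + M), ‖if n < N then 0 else A n‖ ^ 2 =
        ∑ n ∈ Finset.range (N + M), ‖A n‖ ^ 2 - ∑ n ∈ Finset.range N, ‖A n‖ ^ 2 := by
      rw [← Finset.sum_range_add_sum_Ico _ (show N ≤ N + M by omega),
        ← Finset.sum_range_add_sum_Ico _ (show N ≤ N + M by omega), add_sub_cancel_left,
        Finset.sum_eq_zero (fun n hn => by simp [Finset.mem_range.1 hn]), zero_add]
      refine Finset.sum_congr rfl fun n hn => ?_
      rw [if_neg (not_lt.2 (Finset.mem_Ico.1 hn).1)]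
    rw [hR]; linarith
  rw [Metric.tendsto_atTop']
  intro η hη
  set δ : ℝ := η / (4 * (L + 2)) with hδ
  have hδ0 : 0 < δ := by positivity
  have hCp := hC_pos
  have c1 : ∀ᶠ N in atTop, (1 + 1 / δ) * (hC * R N) < η / 4 := by
    have := (hRt.const_mul hC).const_mul (1 + 1 / δ)
    rw [mul_zero, mul_zero] at this
    exact this.eventually_lt_const (by positivity)
  have c2 : ∀ᶠ N in atTop, |∑ n ∈ Finset.range N, ‖D n‖ ^ 2 - L| < min (η / 4) 1 := by
    have := (Metric.tendsto_nhds.1 hLt) (min (η / 4) 1) (by positivity)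
    simpa only [Real.dist_eq] using this
  obtain ⟨N, h1, h2⟩ := (c1.and c2).exists
  have c3 := (Metric.tendsto_nhds.1 (hmean D N)) (min (η / 4) 1) (by positivity)
  obtain ⟨T0, hT0⟩ := eventually_atTop.1 (c3.and (eventually_ge_atTop 1))
  refine ⟨T0, fun T hTT => ?_⟩
  obtain ⟨h3, hT⟩ := hT0 T hTT.le
  rw [Real.dist_eq] at h3 ⊢
  obtain ⟨hmeas, hlin⟩ := htail N (R N) (hRb N) T hT
  have hfin := hcompare fb (hE D (Finset.range N)) (hE_cont _ _) T hT (hC * T * R N)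
    (by
      have : 0 ≤ R N := by simpa using hRb N 0
      positivity) hmeas hlin δ hδ0
  have hTp : 0 < T := by linarith
  set J := ∫ t in (0:ℝ)..T, ‖fb t‖ ^ 2
  set Q := ∫ t in (0:ℝ)..T, ‖hE D (Finset.range N) t‖ ^ 2
  have h4 : |1 / T * J - 1 / T * Q| ≤ δ * (1 / T * Q) + (1 + 1 / δ) * (hC * R N) := by
    rw [← mul_sub, abs_mul, abs_of_pos (by positivity : 0 < 1 / T)]
    refine (mul_le_mul_of_nonneg_left hfin (by positivity)).trans (le_of_eq ?_)
    field_simp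
  have hlt1 := h2.trans_le (min_le_left _ _)
  have hlt2 := h2.trans_le (min_le_right _ _)
  have hlt3 := h3.trans_le (min_le_left _ _)
  have hlt4 := h3.trans_le (min_le_right _ _)
  have h5 : 1 / T * Q ≤ L + 2 := by
    have := (abs_lt.1 hlt2).2
    have := (abs_lt.1 hlt4).2
    linarith
  have h6 : δ * (1 / T * Q) ≤ η / 4 := by
    refine (mul_le_mul_of_nonneg_left h5 hδ0.le).trans (le_of_eq ?_)
    rw [hδ]; field_simp
  rw [abs_lt] at hlt1 hlt3 ⊢
  rw [abs_le] at h4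
  constructor <;> linarith
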